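/- arXiv:2004.03493 — 2 statements merged into one kernel-verified Lean document; each statement's English description precedes it below -/
import Mathlib

section
/- The sparsified linearization changes the single-source estimate by at most ε: |(1/(1−√c)²)·Σ_{ℓ=0}^L Σ_{k∈V} π̂_i^ℓ(k)·π_j^ℓ(k)·D̂(k,k) − (1/(1−√c)²)·Σ_{ℓ=0}^L Σ_{k∈V} π_i^ℓ(k)·π_j^ℓ(k)·D̂(k,k)| ≤ ε (the error part of Lemma 2). -/
open Finset

theorem norm_sum_mul_sub_sum_mul_le {ι R : Type*} [NonUnitalSeminormedRing R] (s : Finset ι)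
    {f g w : ι → R} {δ : ℝ} (hfg : ∀ i ∈ s, ‖f i - g i‖ ≤ δ) :
    ‖∑ i ∈ s, f i * w i - ∑ i ∈ s, g i * w i‖ ≤ δ * ∑ i ∈ s, ‖w i‖ := by
  simp only [← sum_sub_distrib, ← sub_mul, mul_sum]
  exact norm_sum_le_of_le s fun i hi => norm_mul_le_of_le (hfg i hi) le_rfl

theorem sum_norm_mul_le_sum_norm {ι R : Type*} [NonUnitalSeminormedRing R] (s : Finset ι)
    {w d : ι → R} (hd : ∀ i ∈ s, ‖d i‖ ≤ 1) :
    ∑ i ∈ s, ‖w i * d i‖ ≤ ∑ i ∈ s, ‖w i‖ :=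
  sum_le_sum fun i hi =>
    (norm_mul_le _ _).trans (mul_le_of_le_one_right (norm_nonneg _) (hd i hi))

theorem one_sub_sqrt_sq_pos {c : ℝ} (hc : c < 1) : 0 < (1 - √c) ^ 2 :=
  pow_pos (sub_pos.2 ((Real.sqrt_lt' one_pos).2 (by rwa [one_pow]))) 2

-- The sum over levels and nodes is one finite sum over pairs, so the estimate is the
-- `ℓ^∞`–`ℓ¹` Hölder inequality for the weights `πj ℓ k * Dhat k`.
theorem exactsim_sparse_linearization_error_general {V : Type*} [Fintype V] {s ε : ℝ}
    (hs : 0 < s) (hε : 0 ≤ ε) (L : ℕ) {πi πihat πj : ℕ → V → ℝ} {Dhat : V → ℝ}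
    (hclose : ∀ ℓ, ℓ ≤ L → ∀ k, |πihat ℓ k - πi ℓ k| ≤ s * ε)
    (hπjsum : ∑ ℓ ∈ range (L + 1), ∑ k : V, |πj ℓ k| ≤ 1) (hD : ∀ k, |Dhat k| ≤ 1) :
    |(1 / s) * (∑ ℓ ∈ range (L + 1), ∑ k : V, πihat ℓ k * πj ℓ k * Dhat k) -
      (1 / s) * (∑ ℓ ∈ range (L + 1), ∑ k : V, πi ℓ k * πj ℓ k * Dhat k)| ≤ ε := by
  rw [← mul_sub, abs_mul, abs_of_pos (one_div_pos.2 hs), one_div, inv_mul_le_iff₀ hs]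
  simp only [← sum_product', mul_assoc] at hπjsum ⊢
  have hweights : ∑ p ∈ range (L + 1) ×ˢ univ, |πj p.1 p.2 * Dhat p.2| ≤ 1 :=
    (sum_norm_mul_le_sum_norm (d := fun p => Dhat p.2) _ fun p _ => hD p.2).trans hπjsum
  have hclose_pairs : ∀ p ∈ range (L + 1) ×ˢ (univ : Finset V),
      |πihat p.1 p.2 - πi p.1 p.2| ≤ s * ε := fun p hp =>
    hclose p.1 (mem_range_succ_iff.1 (mem_product.1 hp).1) p.2
  calc
    _ ≤ s * ε * ∑ p ∈ range (L + 1) ×ˢ univ, |πj p.1 p.2 * Dhat p.2| :=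
      norm_sum_mul_sub_sum_mul_le (w := fun p => πj p.1 p.2 * Dhat p.2) _ hclose_pairs
    _ ≤ s * ε := mul_le_of_le_one_right (by positivity) hweights

/-- **Lemma 2 (error part) of the ExactSim paper.**
The sparsified linearization changes the single-source estimate by at most `ε`: if the
sparsified `ℓ`-hop Personalized PageRank values `π̂_i^ℓ(k)` differ from the exact values
`π_i^ℓ(k)` by at most `(1−√c)²·ε`, the values `π_j^ℓ(k)` are nonnegative with total sum
at most `1`, and `0 ≤ D̂(k,k) ≤ 1`, then
`|(1/(1−√c)²)·Σ_ℓ Σ_k π̂_i^ℓ(k)·π_j^ℓ(k)·D̂(k,k)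
  − (1/(1−√c)²)·Σ_ℓ Σ_k π_i^ℓ(k)·π_j^ℓ(k)·D̂(k,k)| ≤ ε`. -/
theorem exactsim_sparse_linearization_error
    {V : Type*} [Fintype V]
    (c ε : ℝ) (hc0 : 0 < c) (hc1 : c < 1) (hε : 0 < ε)
    (L : ℕ)
    (πi πihat πj : ℕ → V → ℝ)
    (hπi : ∀ ℓ, ℓ ≤ L → ∀ k, 0 ≤ πi ℓ k)
    (hπihat : ∀ ℓ, ℓ ≤ L → ∀ k, 0 ≤ πihat ℓ k)
    (hclose : ∀ ℓ, ℓ ≤ L → ∀ k, |πihat ℓ k - πi ℓ k| ≤ (1 - Real.sqrt c) ^ 2 * ε)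
    (hπj : ∀ ℓ, ℓ ≤ L → ∀ k, 0 ≤ πj ℓ k)
    (hπjsum : ∑ ℓ ∈ range (L + 1), ∑ k : V, πj ℓ k ≤ 1)
    (Dhat : V → ℝ) (hD : ∀ k, 0 ≤ Dhat k ∧ Dhat k ≤ 1) :
    |(1 / (1 - Real.sqrt c) ^ 2) *
        (∑ ℓ ∈ range (L + 1), ∑ k : V, πihat ℓ k * πj ℓ k * Dhat k) -
      (1 / (1 - Real.sqrt c) ^ 2) *
        (∑ ℓ ∈ range (L + 1), ∑ k : V, πi ℓ k * πj ℓ k * Dhat k)| ≤ ε := by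
  refine exactsim_sparse_linearization_error_general (one_sub_sqrt_sq_pos hc1) hε.le L hclose
    (hπjsum.trans' (sum_le_sum fun ℓ hℓ => sum_le_sum fun k _ => ?_))
    fun k => (abs_of_nonneg (hD k).1).trans_le (hD k).2
  exact (abs_of_nonneg (hπj ℓ (mem_range_succ_iff.1 hℓ) k)).le
end

section
/- For every integer ℓ ≥ 1 and all nodes k, q ∈ V, the first-meeting weights satisfy the recursion Z_ℓ(k,q) = c^ℓ·(Q^ℓ(k,q))² − Σ_{ℓ′=1}^{ℓ−1} Σ_{q′∈V} c^{ℓ′}·(Q^{ℓ′}(q′,q))²·Z_{ℓ−ℓ′}(k,q′) (Lemma 4). -/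
open Finset Matrix

/-- The weight of a length-`ℓ` path `p : {0,…,ℓ} → V` with respect to the one-step
transition matrix `Q`: `w(p) = Π_{t=0}^{ℓ−1} Q(p(t), p(t+1))`. -/
def pathWeight {V : Type*} (Q : V → V → ℝ) {ℓ : ℕ} (p : Fin (ℓ + 1) → V) : ℝ :=
  ∏ t : Fin ℓ, Q (p t.castSucc) (p t.succ)

/-- The first-meeting weight `Z_ℓ(k,q)`: `c^ℓ` times the total weight of ordered pairs
of length-`ℓ` paths that both start at `k`, both end at `q`, and do not meet at any
intermediate step `1 ≤ t ≤ ℓ−1`. -/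
def firstMeetWeight {V : Type*} [Fintype V] [DecidableEq V]
    (c : ℝ) (Q : V → V → ℝ) (ℓ : ℕ) (k q : V) : ℝ :=
  c ^ ℓ * ∑ p₁ : Fin (ℓ + 1) → V, ∑ p₂ : Fin (ℓ + 1) → V,
    if p₁ 0 = k ∧ p₂ 0 = k ∧ p₁ (Fin.last ℓ) = q ∧ p₂ (Fin.last ℓ) = q ∧
        ∀ t : Fin (ℓ + 1), 0 < (t : ℕ) → (t : ℕ) < ℓ → p₁ t ≠ p₂ t
    then pathWeight Q p₁ * pathWeight Q p₂ else 0

/-!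
Two independent walks form a single walk on `V × V` with matrix `Q ⊗ Q`, and they meet exactly when
that walk hits the diagonal. Splitting the steps of any matrix `M` into those that enter a set `S`
and those that do not, `M = A + B`, each walk ending in `S` is cut uniquely at its first entrance
into `S`; algebraically this is the expansion of `(A + B) ^ n` along the first occurrence of `A`.
For `M = Q ⊗ Q` and `S` the diagonal, the term in which the first entrance is the endpoint is the
first-meeting weight.
-/

open scoped Kronecker

lemma add_pow_eq_pow_add_sum_mul_mul {R : Type*} [Semiring R] (A B : R) (n : ℕ) :
    (A + B) ^ n = B ^ n + ∑ m ∈ range n, B ^ (n - 1 - m) * A * (A + B) ^ m := by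
  induction n with
  | zero => simp
  | succ n ih =>
    have expand_tail : ∑ m ∈ range n, B ^ (n - m) * A * (A + B) ^ m =
        B * ∑ m ∈ range n, B ^ (n - 1 - m) * A * (A + B) ^ m := by
      rw [mul_sum]
      refine sum_congr rfl fun m hm ↦ ?_
      have exponent : n - m = n - 1 - m + 1 := by grind
      rw [exponent, pow_succ', mul_assoc, mul_assoc, mul_assoc]
    calc (A + B) ^ (n + 1)
        = A * (A + B) ^ n + B * (A + B) ^ n := by rw [pow_succ', add_mul]
      _ = A * (A + B) ^ n +
            B * (B ^ n + ∑ m ∈ range n, B ^ (n - 1 - m) * A * (A + B) ^ m) := by rw [← ih]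
      _ = B ^ (n + 1) + ∑ m ∈ range (n + 1), B ^ (n + 1 - 1 - m) * A * (A + B) ^ m := by
        rw [mul_add, ← pow_succ', Nat.add_sub_cancel, sum_range_succ, expand_tail, Nat.sub_self,
          pow_zero, one_mul]
        abel

section Avoiding

variable {W R : Type*} [DecidableEq W]

/-- The transition matrix `M` with every step that enters `S` suppressed, so that its powers
collect the walks that avoid `S` at every time except possibly the initial one. -/
def avoiding [Zero R] (M : Matrix W W R) (S : Finset W) : Matrix W W R :=
  of fun i j ↦ if j ∉ S then M i j else 0

/-- The transition matrix `M` with only the steps that enter `S` retained; it supplies the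
entrance step when a walk is cut at its first entrance into `S`. -/
def entering [Zero R] (M : Matrix W W R) (S : Finset W) : Matrix W W R :=
  of fun i j ↦ if j ∈ S then M i j else 0

lemma entering_add_avoiding [AddZeroClass R] (M : Matrix W W R) (S : Finset W) :
    entering M S + avoiding M S = M := by
  ext i j
  by_cases hj : j ∈ S <;> simp [entering, avoiding, hj]

variable [Fintype W] [Semiring R]

/-- The entry `(i, j)` is the total weight of the walks of length `n + 1` from `i` to `j` whose
`n` intermediate vertices lie outside `S`. Neither endpoint is constrained, so for `j ∈ S` this is
the weight of the walks that first enter `S` after time `0` at `j`, in `n + 1` steps. -/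
def firstPassage (M : Matrix W W R) (S : Finset W) (n : ℕ) : Matrix W W R :=
  avoiding M S ^ n * M

lemma avoiding_pow_succ_apply_of_mem (M : Matrix W W R) {S : Finset W} (n : ℕ) (i : W) {j : W}
    (hj : j ∈ S) : (avoiding M S ^ (n + 1)) i j = 0 := by
  simp [pow_succ, mul_apply, avoiding, hj]

lemma avoiding_pow_mul_entering_apply (M : Matrix W W R) (S : Finset W) (n : ℕ) (i j : W) :
    (avoiding M S ^ n * entering M S) i j = if j ∈ S then firstPassage M S n i j else 0 := by
  by_cases hj : j ∈ S <;> simp [firstPassage, entering, mul_apply, hj]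

theorem pow_succ_apply_eq_sum_firstPassage (M : Matrix W W R) {S : Finset W} (n : ℕ) (i : W)
    {j : W} (hj : j ∈ S) :
    (M ^ (n + 1)) i j =
      ∑ m ∈ range (n + 1), ∑ s ∈ S, firstPassage M S (n - m) i s * (M ^ m) s j := by
  have first_entrance := congr_fun₂
    (add_pow_eq_pow_add_sum_mul_mul (entering M S) (avoiding M S) (n + 1)) i j
  rw [entering_add_avoiding, Matrix.add_apply, avoiding_pow_succ_apply_of_mem M n i hj, zero_add,
    Matrix.sum_apply] at first_entrance
  simpa only [mul_apply (N := M ^ _), avoiding_pow_mul_entering_apply, ite_mul, zero_mul,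
    sum_ite_mem, univ_inter, Nat.add_sub_cancel] using first_entrance

end Avoiding

section Paths

variable {W R : Type*} [Fintype W] [DecidableEq W] [CommSemiring R]

theorem list_prod_ofFn_apply_eq_sum_paths {n : ℕ} (N : Fin n → Matrix W W R) (i j : W) :
    (List.ofFn N).prod i j = ∑ p : Fin (n + 1) → W,
      if p 0 = i ∧ p (Fin.last n) = j then ∏ t, N t (p t.castSucc) (p t.succ) else 0 := by
  induction n generalizing i with
  | zero =>
    rw [← (Equiv.funUnique (Fin 1) W).symm.sum_comp]
    simp [one_apply, ite_and]
  | succ n ih =>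
    have split_first (p : Fin (n + 1) → W) (x : W) :
        (∏ t, N t ((Fin.cons x p : Fin (n + 2) → W) t.castSucc)
            ((Fin.cons x p : Fin (n + 2) → W) t.succ)) =
          N 0 x (p 0) * ∏ t : Fin n, N t.succ (p t.castSucc) (p t.succ) := by
      simp [Fin.prod_univ_succ]
    rw [List.ofFn_succ, List.prod_cons, mul_apply, ← (Fin.consEquiv fun _ ↦ W).sum_comp,
      Fintype.sum_prod_type_right]
    simp only [ih, mul_sum]
    rw [sum_comm]
    refine sum_congr rfl fun p _ ↦ ?_
    simp only [Fin.consEquiv_apply, split_first]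
    simp [← Fin.succ_last, ite_and]

theorem firstPassage_apply_eq_sum_paths (M : Matrix W W R) (S : Finset W) (n : ℕ) (i j : W) :
    firstPassage M S n i j = ∑ p : Fin (n + 2) → W,
      if p 0 = i ∧ p (Fin.last (n + 1)) = j ∧ ∀ t : Fin n, p t.castSucc.succ ∉ S
      then ∏ t : Fin (n + 1), M (p t.castSucc) (p t.succ) else 0 := by
  have as_list_prod : firstPassage M S n =
      (List.ofFn (Fin.snoc (fun _ ↦ avoiding M S) M : Fin (n + 1) → Matrix W W R)).prod := by
    rw [List.ofFn_succ']
    simp [firstPassage, List.ofFn_const]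
  rw [as_list_prod, list_prod_ofFn_apply_eq_sum_paths]
  refine sum_congr rfl fun p _ ↦ ?_
  simp only [Fin.prod_univ_castSucc, Fin.snoc_castSucc, Fin.snoc_last, avoiding, of_apply,
    Fin.succ_castSucc, Fintype.prod_ite_zero, ite_mul, zero_mul, ← ite_and, and_assoc]

end Paths

lemma kronecker_pow {m n R : Type*} [Fintype m] [DecidableEq m] [Fintype n] [DecidableEq n]
    [CommSemiring R] (A : Matrix m m R) (B : Matrix n n R) (k : ℕ) :
    (A ⊗ₖ B) ^ k = (A ^ k) ⊗ₖ (B ^ k) := by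
  induction k with
  | zero => simp
  | succ k ih => rw [pow_succ, pow_succ, pow_succ, ih, mul_kronecker_mul]

lemma forall_fin_interior_iff {n : ℕ} {P : Fin (n + 2) → Prop} :
    (∀ t : Fin (n + 2), 0 < (t : ℕ) → (t : ℕ) < n + 1 → P t) ↔
      ∀ t : Fin n, P t.castSucc.succ := by
  simp [Fin.forall_fin_succ (n := n + 1), Fin.forall_fin_succ' (n := n)]

section Meeting

variable {V : Type*} [Fintype V] [DecidableEq V]

theorem firstMeetWeight_succ_eq_firstPassage (c : ℝ) (Q : V → V → ℝ) (n : ℕ) (k q : V) :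
    firstMeetWeight c Q (n + 1) k q =
      c ^ (n + 1) * firstPassage (of Q ⊗ₖ of Q) univ.diag n (k, k) (q, q) := by
  rw [firstMeetWeight, firstPassage_apply_eq_sum_paths,
    ← (Equiv.arrowProdEquivProdArrow _ _ _).symm.sum_comp, Fintype.sum_prod_type]
  congr 1
  refine sum_congr rfl fun p₁ _ ↦ sum_congr rfl fun p₂ _ ↦ ?_
  have meet_iff : (p₁ 0 = k ∧ p₂ 0 = k ∧ p₁ (Fin.last (n + 1)) = q ∧ p₂ (Fin.last (n + 1)) = q ∧
      ∀ t : Fin (n + 2), 0 < (t : ℕ) → (t : ℕ) < n + 1 → p₁ t ≠ p₂ t) ↔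
      (p₁ 0, p₂ 0) = (k, k) ∧ (p₁ (Fin.last (n + 1)), p₂ (Fin.last (n + 1))) = (q, q) ∧
        ∀ t : Fin n, (p₁ t.castSucc.succ, p₂ t.castSucc.succ) ∉ (univ : Finset V).diag := by
    simp only [forall_fin_interior_iff (P := fun t ↦ p₁ t ≠ p₂ t), Prod.mk.injEq, mem_diag,
      mem_univ, true_and, and_assoc]
  simp only [meet_iff, pathWeight, ← prod_mul_distrib]
  rfl

theorem sq_pow_succ_apply_eq_sum_firstPassage {R : Type*} [CommSemiring R] (Q : Matrix V V R)
    (n : ℕ) (k q : V) :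
    ((Q ^ (n + 1)) k q) ^ 2 = ∑ m ∈ range (n + 1), ∑ q',
      firstPassage (Q ⊗ₖ Q) univ.diag (n - m) (k, k) (q', q') * ((Q ^ m) q' q) ^ 2 := by
  have diagonal : (q, q) ∈ (univ : Finset V).diag := by simp
  simpa only [kronecker_pow, kroneckerMap_apply, sum_diag, ← sq] using
    pow_succ_apply_eq_sum_firstPassage (Q ⊗ₖ Q) n (k, k) diagonal

end Meeting

/-- **Lemma 4 of the ExactSim paper.**
For every `ℓ ≥ 1` and all nodes `k, q`, the first-meeting weights satisfy the recursion
`Z_ℓ(k,q) = c^ℓ·(Q^ℓ(k,q))² − Σ_{ℓ′=1}^{ℓ−1} Σ_{q′} c^{ℓ′}·(Q^{ℓ′}(q′,q))²·Z_{ℓ−ℓ′}(k,q′)`. -/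
theorem firstMeetWeight_recursion
    {V : Type*} [Fintype V] [DecidableEq V]
    (c : ℝ) (Q : V → V → ℝ) (ℓ : ℕ) (hℓ : 1 ≤ ℓ) (k q : V) :
    firstMeetWeight c Q ℓ k q =
      c ^ ℓ * ((Matrix.of Q ^ ℓ) k q) ^ 2 -
        ∑ ℓ' ∈ Finset.Ico 1 ℓ, ∑ q' : V,
          c ^ ℓ' * ((Matrix.of Q ^ ℓ') q' q) ^ 2 * firstMeetWeight c Q (ℓ - ℓ') k q' := by
  obtain ⟨n, rfl⟩ := Nat.exists_eq_add_of_le' hℓ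
  have all_meetings : c ^ (n + 1) * ((of Q ^ (n + 1)) k q) ^ 2 =
      ∑ m ∈ range (n + 1), ∑ q', c ^ m * ((of Q ^ m) q' q) ^ 2 *
        firstMeetWeight c Q (n + 1 - m) k q' := by
    simp only [sq_pow_succ_apply_eq_sum_firstPassage, mul_sum]
    refine sum_congr rfl fun m hm ↦ sum_congr rfl fun q' _ ↦ ?_
    have hmn : m ≤ n := mem_range_succ_iff.mp hm
    have c_pow : c ^ (n + 1) = c ^ m * c ^ (n - m + 1) := by
      rw [← pow_add]
      congr 1
      omega
    rw [Nat.sub_add_comm hmn, firstMeetWeight_succ_eq_firstPassage, c_pow]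
    ring
  have meet_at_end : ∑ q', c ^ 0 * ((of Q ^ 0) q' q) ^ 2 * firstMeetWeight c Q (n + 1 - 0) k q' =
      firstMeetWeight c Q (n + 1) k q := by
    simp [one_apply]
  rw [all_meetings, sum_range_eq_add_Ico _ n.succ_pos, meet_at_end, add_sub_cancel_right]
end
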